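/- Let (X,d*) be a bounded complete separable metric space with d* ≤ 1, and let W̄ denote the Wasserstein-1 distance on probability measures with respect to d*. Suppose P* : M₁(X) → M₁(X) is induced by a Markov kernel such that for every pair of Dirac measures W̄(P*(δ_x), P*(δ_y)) ≤ t·d*(x,y) for some t ∈ (0,1). Then W̄(P*(ν₁), P*(ν₂)) ≤ t·W̄(ν₁, ν₂) for all probability measures ν₁, ν₂. -/

import Mathlib

/-!
Contraction on Dirac measures makes the kernel Feller: the easy half of Kantorovich duality
(`dist_integral_le_mul_wass`) shows that `x ↦ ∫ f dκ(x)` is continuous for bounded Lipschitz `f`.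
This makes a measurable selection of optimal couplings of `κ x` and `κ y` unnecessary.

Given a coupling `P` of `ν₁` and `ν₂`, approximate the identity of `X` by simple functions `sₙ`.
As `sₙ × sₙ` takes finitely many values, one can choose for each value a coupling of the two image
measures whose cost is within `1 / (n + 1)` of the optimum, and mix these along `P`. This gives a
coupling `πₙ` of the images under `κ` of the laws of `sₙ` under `ν₁` and `ν₂`, with cost at most
`t ∫ d(sₙ x, sₙ y) dP + 1 / (n + 1)` (`exists_coupling_simpleFunc`). By the Feller property the
marginals of `πₙ` converge weakly to `ν₁κ` and `ν₂κ` (`tendsto_bind_map`), hence are tight, and so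
`(πₙ)` is tight. By Prokhorov's theorem it has a weak limit point, which is a coupling of `ν₁κ` and
`ν₂κ`; since the distance is bounded and continuous, its cost is at most `t ∫ d dP`
(`wass_bind_le_of_isCoupling`). Taking the infimum over `P` concludes.
-/

open MeasureTheory

/-- `π` is a coupling of `μ` and `ν`. -/
def IsCoupling {X : Type*} [MeasurableSpace X]
    (π : Measure (X × X)) (μ ν : Measure X) : Prop :=
  π.map Prod.fst = μ ∧ π.map Prod.snd = ν

/-- Wasserstein-1 distance with respect to a cost function `dstar`. -/
noncomputable def wass {X : Type*} [MeasurableSpace X]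
    (dstar : X → X → ℝ) (μ ν : Measure X) : ℝ :=
  sInf {r : ℝ | ∃ π : Measure (X × X), IsProbabilityMeasure π ∧ IsCoupling π μ ν ∧
    r = ∫ p, dstar p.1 p.2 ∂π}

open Filter Topology
open scoped ProbabilityTheory

lemma integral_bind_kernel {α β : Type*} [MeasurableSpace α] [MeasurableSpace β]
    (K : ProbabilityTheory.Kernel α β) [ProbabilityTheory.IsMarkovKernel K]
    (P : Measure α) [IsProbabilityMeasure P] {f : β → ℝ} (hf : Integrable f (K ∘ₘ P)) :
    Integrable (fun a => ∫ b, f b ∂K a) P ∧ ∫ b, f b ∂(K ∘ₘ P) = ∫ a, ∫ b, f b ∂K a ∂P := by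
  have e : (K ∘ₖ ProbabilityTheory.Kernel.const Unit P) () = K ∘ₘ P := by
    rw [ProbabilityTheory.Kernel.comp_apply, ProbabilityTheory.Kernel.const_apply]
  rw [← e] at hf ⊢
  have h1 := hf.integral_comp
  have h2 := ProbabilityTheory.Kernel.integral_comp hf
  rw [ProbabilityTheory.Kernel.const_apply] at h1 h2
  exact ⟨h1, h2⟩

section Aux

variable {X : Type*} [MetricSpace X] [MeasurableSpace X]

lemma wass_le_of_isCoupling {μ ν : Measure X} (π : Measure (X × X)) (hπ : IsProbabilityMeasure π)
    (hc : IsCoupling π μ ν) : wass dist μ ν ≤ ∫ p, dist p.1 p.2 ∂π := by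
  refine csInf_le ⟨0, ?_⟩ ⟨π, hπ, hc, rfl⟩
  rintro r ⟨π', -, -, rfl⟩
  exact integral_nonneg fun _ => dist_nonneg

lemma wass_set_nonempty (μ ν : Measure X) [IsProbabilityMeasure μ] [IsProbabilityMeasure ν] :
    {r : ℝ | ∃ π : Measure (X × X), IsProbabilityMeasure π ∧ IsCoupling π μ ν ∧
      r = ∫ p, dist p.1 p.2 ∂π}.Nonempty := by
  refine ⟨_, μ.prod ν, inferInstance, ⟨?_, ?_⟩, rfl⟩
  · rw [Measure.map_fst_prod]; simp
  · rw [Measure.map_snd_prod]; simp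

lemma exists_isCoupling_integral_lt (μ ν : Measure X) [IsProbabilityMeasure μ]
    [IsProbabilityMeasure ν] {ε : ℝ} (hε : 0 < ε) :
    ∃ π : Measure (X × X), IsProbabilityMeasure π ∧ IsCoupling π μ ν ∧
      ∫ p, dist p.1 p.2 ∂π < wass dist μ ν + ε := by
  obtain ⟨r, ⟨π, hπ, hc, rfl⟩, hr⟩ := Real.lt_sInf_add_pos (wass_set_nonempty μ ν) hε
  exact ⟨π, hπ, hc, hr⟩

variable [BorelSpace X]

lemma integrable_of_bounded_lipschitz {f : X → ℝ} {C : ℝ} (hC : ∀ x y, dist (f x) (f y) ≤ C)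
    {L : NNReal} (hL : LipschitzWith L f) (μ : Measure X) [IsProbabilityMeasure μ] :
    Integrable f μ := by
  obtain ⟨x₀⟩ : Nonempty X := nonempty_of_isProbabilityMeasure μ
  refine Integrable.of_bound hL.continuous.aestronglyMeasurable (C + ‖f x₀‖)
    (ae_of_all _ fun x => ?_)
  have h1 := hC x x₀
  rw [dist_eq_norm] at h1
  linarith [norm_le_norm_sub_add (f x) (f x₀)]

variable [SecondCountableTopology X]

lemma integrable_dist_of_le_one (hbd : ∀ x y : X, dist x y ≤ 1) (π : Measure (X × X))
    [IsFiniteMeasure π] : Integrable (fun p : X × X => dist p.1 p.2) π := by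
  refine Integrable.of_bound (by fun_prop) 1 (ae_of_all _ fun p => ?_)
  rw [Real.norm_of_nonneg dist_nonneg]
  exact hbd _ _

/-- The easy half of Kantorovich duality: integrals of Lipschitz functions are controlled by the
Wasserstein distance. -/
lemma dist_integral_le_mul_wass (hbd : ∀ x y : X, dist x y ≤ 1) {f : X → ℝ} {C : ℝ}
    (hC : ∀ x y, dist (f x) (f y) ≤ C) {L : NNReal} (hL : LipschitzWith L f)
    (μ ν : Measure X) [IsProbabilityMeasure μ] [IsProbabilityMeasure ν] :
    dist (∫ x, f x ∂μ) (∫ x, f x ∂ν) ≤ L * wass dist μ ν := by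
  have key : ∀ ε > 0, dist (∫ x, f x ∂μ) (∫ x, f x ∂ν) ≤ L * (wass dist μ ν + ε) := by
    intro ε hε
    obtain ⟨π, hπ, ⟨h1, h2⟩, hlt⟩ := exists_isCoupling_integral_lt μ ν hε
    have hfi : Integrable (fun p : X × X => f p.1) π := by
      have := integrable_of_bounded_lipschitz hC hL μ
      rw [← h1] at this
      exact this.comp_measurable measurable_fst
    have hsi : Integrable (fun p : X × X => f p.2) π := by
      have := integrable_of_bounded_lipschitz hC hL ν
      rw [← h2] at this
      exact this.comp_measurable measurable_snd
    have e1 : ∫ x, f x ∂μ = ∫ p, f p.1 ∂π := by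
      rw [← h1, integral_map measurable_fst.aemeasurable hL.continuous.aestronglyMeasurable]
    have e2 : ∫ x, f x ∂ν = ∫ p, f p.2 ∂π := by
      rw [← h2, integral_map measurable_snd.aemeasurable hL.continuous.aestronglyMeasurable]
    rw [e1, e2, dist_eq_norm, ← integral_sub hfi hsi]
    calc ‖∫ p : X × X, (f p.1 - f p.2) ∂π‖
        ≤ ∫ p : X × X, ‖f p.1 - f p.2‖ ∂π := norm_integral_le_integral_norm _
      _ ≤ ∫ p : X × X, L * dist p.1 p.2 ∂π := by
          refine integral_mono (hfi.sub hsi).norm ((integrable_dist_of_le_one hbd π).const_mul _)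
            fun p => ?_
          simpa [dist_eq_norm] using hL.dist_le_mul p.1 p.2
      _ = L * ∫ p : X × X, dist p.1 p.2 ∂π := integral_const_mul _ _
      _ ≤ L * (wass dist μ ν + ε) := by gcongr
  have hlim : Tendsto (fun ε : ℝ => L * (wass dist μ ν + ε)) (𝓝[>] 0)
      (𝓝 (L * (wass dist μ ν + 0))) :=
    ((continuous_const.mul (continuous_const.add continuous_id)).tendsto 0).mono_left
      nhdsWithin_le_nhds
  rw [add_zero] at hlim
  exact ge_of_tendsto hlim (eventually_mem_nhdsWithin.mono key)

/-- A Markov kernel that is Lipschitz for the Wasserstein distance on Dirac measures is Feller.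
Hence if `s n → g` pointwise, the images under the kernel of the laws of `s n` converge weakly to
the image of the law of `g`. -/
lemma tendsto_bind_map (hbd : ∀ x y : X, dist x y ≤ 1) (κ : X → Measure X) (hκ : Measurable κ)
    (hκprob : ∀ x, IsProbabilityMeasure (κ x)) {t : ℝ}
    (hdirac : ∀ x y : X, wass dist (κ x) (κ y) ≤ t * dist x y)
    {Ω : Type*} [MeasurableSpace Ω] (P : Measure Ω) [IsProbabilityMeasure P]
    {s : ℕ → Ω → X} {g : Ω → X} (hs : ∀ n, Measurable (s n)) (hg : Measurable g)
    (hlim : ∀ ω, Tendsto (fun n => s n ω) atTop (𝓝 (g ω)))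
    (μs : ℕ → ProbabilityMeasure X) (μ : ProbabilityMeasure X)
    (hμs : ∀ n, (μs n : Measure X) = (P.map (s n)).bind κ)
    (hμ : (μ : Measure X) = (P.map g).bind κ) :
    Tendsto μs atTop (𝓝 μ) := by
  rw [tendsto_iff_forall_lipschitz_integral_tendsto]
  rintro f ⟨C, hC⟩ ⟨L, hL⟩
  let K : ProbabilityTheory.Kernel X X := ⟨κ, hκ⟩
  have : ProbabilityTheory.IsMarkovKernel K := ⟨hκprob⟩
  obtain ⟨x₀⟩ : Nonempty X := by
    have := nonempty_of_isProbabilityMeasure P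
    exact this.map g
  have hcont : Continuous fun x => ∫ y, f y ∂κ x := by
    rw [continuous_iff_continuousAt]
    intro x
    rw [ContinuousAt, tendsto_iff_dist_tendsto_zero]
    have h0 : Tendsto (fun y => L * (t * dist y x)) (𝓝 x) (𝓝 0) := by
      have : Continuous fun y => (L : ℝ) * (t * dist y x) := by fun_prop
      simpa using this.tendsto x
    refine squeeze_zero (fun _ => dist_nonneg) (fun y => ?_) h0
    exact (dist_integral_le_mul_wass hbd hC hL _ _).trans (by gcongr; exact hdirac y x)
  have hbound : ∀ x, ‖∫ y, f y ∂κ x‖ ≤ C + ‖f x₀‖ := by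
    intro x
    have := norm_integral_le_of_norm_le_const (μ := κ x) (f := f) (C := C + ‖f x₀‖)
      (ae_of_all _ fun y => by
        have h1 := hC y x₀
        rw [dist_eq_norm] at h1
        linarith [norm_le_norm_sub_add (f y) (f x₀)])
    simpa using this
  have hint : ∀ (h : Ω → X) (_ : Measurable h),
      ∫ y, f y ∂((P.map h).bind κ) = ∫ ω, ∫ y, f y ∂κ (h ω) ∂P := by
    intro h hh
    have : IsProbabilityMeasure (P.map h) := Measure.isProbabilityMeasure_map hh.aemeasurable
    refine (integral_bind_kernel K (P.map h)
      (integrable_of_bounded_lipschitz hC hL (K ∘ₘ P.map h))).2.trans ?_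
    exact integral_map hh.aemeasurable hcont.aestronglyMeasurable
  simp_rw [hμs, hμ, hint _ (hs _), hint _ hg]
  refine tendsto_integral_of_dominated_convergence (fun _ => C + ‖f x₀‖)
    (fun n => (hcont.measurable.comp (hs n)).aestronglyMeasurable) (integrable_const _)
    (fun n => ae_of_all _ fun ω => hbound _) (ae_of_all _ fun ω => ?_)
  exact (hcont.tendsto _).comp (hlim ω)

/-- For finitely many starting pairs no measurable selection is needed: near-optimal couplings of
the images of the values of the simple function `s` can be chosen arbitrarily and mixed. -/
lemma exists_coupling_simpleFunc (hbd : ∀ x y : X, dist x y ≤ 1) (κ : X → Measure X)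
    (hκ : Measurable κ) (hκprob : ∀ x, IsProbabilityMeasure (κ x)) {t : ℝ}
    (hdirac : ∀ x y : X, wass dist (κ x) (κ y) ≤ t * dist x y)
    (P : Measure (X × X)) [IsProbabilityMeasure P] (s : SimpleFunc X X) {ε : ℝ} (hε : 0 < ε) :
    ∃ π : ProbabilityMeasure (X × X),
      IsCoupling (π : Measure (X × X)) ((P.map fun p => s p.1).bind κ)
        ((P.map fun p => s p.2).bind κ) ∧
      ∫ p, dist p.1 p.2 ∂(π : Measure (X × X)) ≤ t * ∫ p, dist (s p.1) (s p.2) ∂P + ε := by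
  choose c hcprob hcc hclt using fun p : X × X =>
    exists_isCoupling_integral_lt (κ p.1) (κ p.2) hε
  -- `c` itself need not be measurable, but its composition with a simple function is.
  let S : SimpleFunc (X × X) (X × X) :=
    (s.comp Prod.fst measurable_fst).pair (s.comp Prod.snd measurable_snd)
  let K : ProbabilityTheory.Kernel (X × X) (X × X) := ⟨S.map c, (S.map c).measurable⟩
  have hK : ∀ p, K p = c (s p.1, s p.2) := fun p => rfl
  have : ProbabilityTheory.IsMarkovKernel K := ⟨fun p => by rw [hK]; infer_instance⟩
  -- The marginals of `c (s p.1, s p.2)` are `κ (s p.1)` and `κ (s p.2)`, by the choice of `c`.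
  refine ⟨⟨K ∘ₘ P, inferInstance⟩, ⟨?_, ?_⟩, ?_⟩
  · ext A hA
    change Measure.map _ (P.bind K) A = _
    rw [Measure.map_apply measurable_fst hA, Measure.bind_apply (measurable_fst hA) (by fun_prop),
      Measure.bind_apply hA hκ.aemeasurable,
      lintegral_map (f := fun x => κ x A) (g := fun p : X × X => s p.1)
        ((Measure.measurable_coe hA).comp hκ) (by fun_prop)]
    refine lintegral_congr fun p => ?_
    rw [hK, ← Measure.map_apply measurable_fst hA, (hcc _).1]
  · ext A hA
    change Measure.map _ (P.bind K) A = _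
    rw [Measure.map_apply measurable_snd hA, Measure.bind_apply (measurable_snd hA) (by fun_prop),
      Measure.bind_apply hA hκ.aemeasurable,
      lintegral_map (f := fun x => κ x A) (g := fun p : X × X => s p.2)
        ((Measure.measurable_coe hA).comp hκ) (by fun_prop)]
    refine lintegral_congr fun p => ?_
    rw [hK, ← Measure.map_apply measurable_snd hA, (hcc _).2]
  · change ∫ p, dist p.1 p.2 ∂(K ∘ₘ P) ≤ _
    obtain ⟨hI, hIeq⟩ := integral_bind_kernel K P (integrable_dist_of_le_one hbd (K ∘ₘ P))
    rw [hIeq]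
    have hi : Integrable (fun p : X × X => dist (s p.1) (s p.2)) P := by
      refine Integrable.of_bound ?_ 1 (ae_of_all _ fun p => ?_)
      · exact (Measurable.dist (by fun_prop) (by fun_prop)).aestronglyMeasurable
      · rw [Real.norm_of_nonneg dist_nonneg]
        exact hbd _ _
    calc ∫ p, ∫ q, dist q.1 q.2 ∂(K p) ∂P
        ≤ ∫ p, (t * dist (s p.1) (s p.2) + ε) ∂P := by
          refine integral_mono hI ((hi.const_mul t).add (integrable_const ε))
            fun p => ?_
          simp only [hK]
          linarith [hclt (s p.1, s p.2), hdirac (s p.1) (s p.2)]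
      _ = t * ∫ p, dist (s p.1) (s p.2) ∂P + ε := by
          rw [integral_add (hi.const_mul t) (integrable_const ε), integral_const_mul]
          simp

end Aux

/-- The bound for one coupling `P` of its own marginals: a weak limit of the couplings obtained from
simple approximations of the identity is a coupling of the images of these marginals, and its cost
is at most `t` times the cost of `P`. -/
lemma wass_bind_le_of_isCoupling {X : Type*} [MetricSpace X]
    [MeasurableSpace X] [BorelSpace X] [CompleteSpace X] [SecondCountableTopology X]
    (hbd : ∀ x y : X, dist x y ≤ 1) (κ : X → Measure X)
    (hκ : Measurable κ) (hκprob : ∀ x, IsProbabilityMeasure (κ x)) {t : ℝ}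
    (hdirac : ∀ x y : X, wass dist (κ x) (κ y) ≤ t * dist x y)
    (P : Measure (X × X)) [IsProbabilityMeasure P] :
    wass dist ((P.map Prod.fst).bind κ) ((P.map Prod.snd).bind κ)
      ≤ t * ∫ p, dist p.1 p.2 ∂P := by
  obtain ⟨x₀⟩ : Nonempty X := (nonempty_of_isProbabilityMeasure P).map Prod.fst
  let s : ℕ → SimpleFunc X X :=
    fun n => SimpleFunc.approxOn id measurable_id Set.univ x₀ (Set.mem_univ _) n
  have hs : ∀ x, Tendsto (fun n => s n x) atTop (𝓝 x) := fun x =>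
    SimpleFunc.tendsto_approxOn measurable_id (Set.mem_univ _) (by simp)
  have hprob : ∀ (h : X × X → X) (_ : Measurable h), IsProbabilityMeasure ((P.map h).bind κ) := by
    intro h hh
    have := Measure.isProbabilityMeasure_map (μ := P) hh.aemeasurable
    exact isProbabilityMeasure_bind hκ.aemeasurable (ae_of_all _ hκprob)
  choose π hπc hπle using fun n : ℕ =>
    exists_coupling_simpleFunc hbd κ hκ hκprob hdirac P (s n) (Nat.one_div_pos_of_nat (n := n))
  have hfst : Continuous (Prod.fst : X × X → X) := continuous_fst
  have hsnd : Continuous (Prod.snd : X × X → X) := continuous_snd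
  let μ₁ : ProbabilityMeasure X := ⟨(P.map Prod.fst).bind κ, hprob _ measurable_fst⟩
  let μ₂ : ProbabilityMeasure X := ⟨(P.map Prod.snd).bind κ, hprob _ measurable_snd⟩
  have hT₁ : Tendsto (fun n => (π n).map hfst.measurable.aemeasurable) atTop (𝓝 μ₁) :=
    tendsto_bind_map hbd κ hκ hκprob hdirac P (s := fun n p => s n p.1) (g := Prod.fst)
      (fun n => by fun_prop) measurable_fst (fun p => hs p.1) _ _ (fun n => (hπc n).1) rfl
  have hT₂ : Tendsto (fun n => (π n).map hsnd.measurable.aemeasurable) atTop (𝓝 μ₂) :=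
    tendsto_bind_map hbd κ hκ hκprob hdirac P (s := fun n p => s n p.2) (g := Prod.snd)
      (fun n => by fun_prop) measurable_snd (fun p => hs p.2) _ _ (fun n => (hπc n).2) rfl
  have tight_of_tendsto : ∀ {ρ : ℕ → ProbabilityMeasure X} {ρ₀ : ProbabilityMeasure X},
      Tendsto ρ atTop (𝓝 ρ₀) → IsTightMeasureSet (Set.range fun n => (ρ n : Measure X)) := by
    intro ρ ρ₀ h
    -- A convergent sequence is relatively compact, and `X` is Polish.
    have hc : IsCompact (closure (Set.range ρ)) :=
      h.isCompact_insert_range.closure_of_subset (Set.subset_insert _ _)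
    refine (isTightMeasureSet_of_isCompact_closure hc).subset ?_
    rintro _ ⟨n, rfl⟩
    exact ⟨ρ n, ⟨n, rfl⟩, rfl⟩
  have htight : IsTightMeasureSet
      {((ρ : ProbabilityMeasure (X × X)) : Measure (X × X)) | ρ ∈ Set.range π} := by
    refine IsTightMeasureSet.prodMk ((tight_of_tendsto hT₁).subset ?_)
      ((tight_of_tendsto hT₂).subset ?_) <;>
    · rintro _ ⟨_, ⟨_, ⟨n, rfl⟩, rfl⟩, rfl⟩
      exact ⟨n, rfl⟩
  obtain ⟨π₀, -, φ, hφ, hlim⟩ := (isCompact_closure_of_isTightMeasureSet htight).tendsto_subseq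
    (x := π) fun n => subset_closure ⟨n, rfl⟩
  have e₁ : π₀.map hfst.measurable.aemeasurable = μ₁ :=
    tendsto_nhds_unique (((ProbabilityMeasure.continuous_map hfst).tendsto π₀).comp hlim)
      (hT₁.comp hφ.tendsto_atTop)
  have e₂ : π₀.map hsnd.measurable.aemeasurable = μ₂ :=
    tendsto_nhds_unique (((ProbabilityMeasure.continuous_map hsnd).tendsto π₀).comp hlim)
      (hT₂.comp hφ.tendsto_atTop)
  have hcoup : IsCoupling (π₀ : Measure (X × X)) ((P.map Prod.fst).bind κ)
      ((P.map Prod.snd).bind κ) :=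
    ⟨congrArg (fun ρ : ProbabilityMeasure X => (ρ : Measure X)) e₁,
      congrArg (fun ρ : ProbabilityMeasure X => (ρ : Measure X)) e₂⟩
  refine (wass_le_of_isCoupling _ inferInstance hcoup).trans ?_
  -- The cost is bounded and continuous, so it passes to the weak limit.
  let D : BoundedContinuousFunction (X × X) ℝ :=
    BoundedContinuousFunction.ofNormedAddCommGroup (fun p => dist p.1 p.2) continuous_dist 1
      fun p => by rw [Real.norm_of_nonneg dist_nonneg]; exact hbd _ _
  have hcost := (ProbabilityMeasure.tendsto_iff_forall_integral_tendsto.1 hlim) D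
  have hdom : Tendsto (fun n => ∫ p, dist (s n p.1) (s n p.2) ∂P) atTop
      (𝓝 (∫ p, dist p.1 p.2 ∂P)) := by
    refine tendsto_integral_of_dominated_convergence (fun _ => 1)
      (fun n => (Measurable.dist (by fun_prop) (by fun_prop)).aestronglyMeasurable)
      (integrable_const _) (fun n => ae_of_all _ fun p => ?_)
      (ae_of_all _ fun p => (hs p.1).dist (hs p.2))
    rw [Real.norm_of_nonneg dist_nonneg]
    exact hbd _ _
  have hrhs := ((hdom.const_mul t).add tendsto_one_div_add_atTop_nhds_zero_nat).comp
    hφ.tendsto_atTop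
  rw [add_zero] at hrhs
  exact le_of_tendsto_of_tendsto' hcost hrhs fun n => hπle (φ n)

/-- If a Markov operator contracts the Wasserstein distance between Dirac
measures with factor `t < 1`, then it contracts the Wasserstein distance
between arbitrary probability measures with the same factor. -/
theorem wasserstein_contraction_of_dirac {X : Type*} [MetricSpace X]
    [MeasurableSpace X] [BorelSpace X] [CompleteSpace X]
    [TopologicalSpace.SeparableSpace X]
    (hbd : ∀ x y : X, dist x y ≤ 1)
    (κ : X → Measure X) (hκmeas : Measurable κ)
    (hκprob : ∀ x, IsProbabilityMeasure (κ x))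
    (t : ℝ) (ht0 : 0 < t) (ht1 : t < 1)
    (hdirac : ∀ x y : X,
      wass dist ((Measure.dirac x).bind κ) ((Measure.dirac y).bind κ) ≤ t * dist x y) :
    ∀ ν₁ ν₂ : Measure X, IsProbabilityMeasure ν₁ → IsProbabilityMeasure ν₂ →
      wass dist (ν₁.bind κ) (ν₂.bind κ) ≤ t * wass dist ν₁ ν₂ := by
  intro ν₁ ν₂ h₁ h₂
  have : SecondCountableTopology X := UniformSpace.secondCountable_of_separable X
  simp_rw [Measure.dirac_bind hκmeas] at hdirac
  rw [← div_le_iff₀' ht0]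
  refine le_csInf (wass_set_nonempty ν₁ ν₂) ?_
  rintro r ⟨P, hP, ⟨rfl, rfl⟩, rfl⟩
  rw [div_le_iff₀' ht0]
  exact wass_bind_le_of_isCoupling hbd κ hκmeas hκprob hdirac P
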